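/- Let X and Y be centered Gaussian random vectors in R^k satisfying E[(X_i − X_j)^2] ≤ E[(Y_i − Y_j)^2] for all 1 ≤ i, j ≤ k. Let σ = max_{1≤i≤k} sqrt(E[X_i^2] + E[Y_i^2]) and let g be a standard normal random variable. Then for every real m ≥ 1, E[(max_{1≤i≤k} |X_i|)^m] ≤ 2^{m−1} · (σ^m · E[|g|^m] + E[(max_{1≤i≤k} |Y_i|)^m]). -/

import Mathlib

open MeasureTheory ProbabilityTheory Real
open scoped NNReal BigOperators

/-- A random vector `X` on `(Ω, P)` is a centered Gaussian random vector if every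
linear combination of its coordinates is a centered real Gaussian random variable. -/
def IsCenteredGaussianVec {Ω : Type*} [MeasurableSpace Ω] {k : ℕ}
    (P : Measure Ω) (X : Ω → Fin k → ℝ) : Prop :=
  ∀ a : Fin k → ℝ,
    Measure.map (fun ω => ∑ i, a i * X ω i) P
      = gaussianReal 0 (variance (fun ω => ∑ i, a i * X ω i) P).toNNReal

lemma stein_real (v : ℝ≥0) (hv : v ≠ 0) (g g' : ℝ → ℝ) (hg : ∀ x, HasDerivAt g (g' x) x)
    (h1 : Integrable (fun x => x * g x) (gaussianReal 0 v)) (h2 : Integrable g (gaussianReal 0 v))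
    (h3 : Integrable g' (gaussianReal 0 v)) :
    ∫ x, x * g x ∂(gaussianReal 0 v) = v * ∫ x, g' x ∂(gaussianReal 0 v) := by
  have key : ∀ u : ℝ → ℝ, Integrable u (gaussianReal 0 v) →
      Integrable (fun x => gaussianPDFReal 0 v x * u x) := by
    intro u hu
    rw [gaussianReal_of_var_ne_zero _ hv,
      integrable_withDensity_iff_integrable_smul' (measurable_gaussianPDF _ _)
        (Filter.Eventually.of_forall fun x => gaussianPDF_lt_top)] at hu
    simpa [toReal_gaussianPDF] using hu
  have hv' : (v : ℝ) ≠ 0 := by exact_mod_cast hv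
  have hp : ∀ x, HasDerivAt (gaussianPDFReal 0 v) (-(x / v) * gaussianPDFReal 0 v x) x := by
    intro x
    rw [gaussianPDFReal_def]
    have : HasDerivAt (fun x : ℝ => -(x - 0) ^ 2 / (2 * (v : ℝ))) (-(x / v)) x := by
      have := ((((hasDerivAt_id x).sub_const 0).pow 2).neg).div_const (2 * (v : ℝ))
      refine this.congr_deriv ?_
      simp; field_simp
    have := (this.exp).const_mul (√(2 * π * v))⁻¹
    refine this.congr_deriv ?_
    ring
  rw [integral_gaussianReal_eq_integral_smul hv, integral_gaussianReal_eq_integral_smul hv]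
  simp only [smul_eq_mul]
  have := integral_mul_deriv_eq_deriv_mul_of_integrable (u := g) (u' := g')
    (v := gaussianPDFReal 0 v) (v' := fun x => -(x / v) * gaussianPDFReal 0 v x)
    (fun x _ => hg x) (fun x _ => hp x)
    (by
      have := (key _ h1).const_mul (-(v : ℝ)⁻¹)
      refine this.congr (Filter.Eventually.of_forall fun x => ?_)
      simp; field_simp)
    (by
      refine (key _ h3).congr (Filter.Eventually.of_forall fun x => ?_)
      simp; ring)
    (by
      refine (key _ h2).congr (Filter.Eventually.of_forall fun x => ?_)
      simp; ring)
  have e1 : ∫ x, g x * (-(x / v) * gaussianPDFReal 0 v x)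
      = -(v : ℝ)⁻¹ * ∫ x, gaussianPDFReal 0 v x * (x * g x) := by
    rw [← integral_const_mul]
    congr 1; ext x; field_simp
  have e2 : ∫ x, g' x * gaussianPDFReal 0 v x = ∫ x, gaussianPDFReal 0 v x * g' x := by
    congr 1; ext x; ring
  rw [e1, e2] at this
  generalize (∫ x, gaussianPDFReal 0 v x * (x * g x)) = A at *
  generalize (∫ x, gaussianPDFReal 0 v x * g' x) = B at *
  field_simp at this
  linarith

lemma stein_vec {Ω ι : Type*} [MeasurableSpace Ω] [Fintype ι] {P : Measure Ω}
    [IsProbabilityMeasure P] (v : Ω → ℝ) (U : Ω → ι → ℝ)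
    (hG : HasGaussianLaw (fun ω => (v ω, U ω)) P) (hv0 : ∫ ω, v ω ∂P = 0)
    (ψ : (ι → ℝ) → ℝ) (dψ : ι → (ι → ℝ) → ℝ)
    (hψm : Measurable ψ) (hdm : ∀ j, Measurable (dψ j))
    (hψ : ∀ x c : ι → ℝ, ∀ t : ℝ, HasDerivAt (fun t : ℝ => ψ (x + t • c))
      (∑ j, dψ j (x + t • c) * c j) t)
    (h1 : Integrable (fun ω => v ω * ψ (U ω)) P) (h2 : Integrable (fun ω => ψ (U ω)) P)
    (h3 : ∀ j, Integrable (fun ω => dψ j (U ω)) P) :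
    ∫ ω, v ω * ψ (U ω) ∂P = ∑ j, (∫ ω, v ω * U ω j ∂P) * ∫ ω, dψ j (U ω) ∂P := by
  classical
  have hvG : HasGaussianLaw v P := hG.fst
  have hUG : HasGaussianLaw U P := hG.snd
  have hUj : ∀ j, HasGaussianLaw (fun ω => U ω j) P := fun j =>
    hUG.map_fun (ContinuousLinearMap.proj (R := ℝ) (φ := fun _ : ι => ℝ) j)
  have hv2 := hvG.memLp_two
  have hvar : Var[v; P] = ∫ ω, v ω ^ 2 ∂P := by
    rw [variance_eq_sub hv2, hv0]; simp
  set s : ℝ := ∫ ω, v ω ^ 2 ∂P with hs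
  have hs0 : 0 ≤ s := integral_nonneg fun ω => sq_nonneg _
  rcases hs0.eq_or_lt with hs0 | hspos
  · have hvz : v =ᵐ[P] 0 := by
      have := (integral_eq_zero_iff_of_nonneg (fun ω => sq_nonneg (v ω)) hv2.integrable_sq).1
        hs0.symm
      filter_upwards [this] with ω hω
      simpa using hω
    rw [integral_eq_zero_of_ae (by filter_upwards [hvz] with ω hω; simp [hω])]
    rw [Finset.sum_eq_zero]
    intro j _
    rw [integral_eq_zero_of_ae (by filter_upwards [hvz] with ω hω; simp [hω])]
    simp
  set c : ι → ℝ := fun j => (∫ ω, v ω * U ω j ∂P) / s with hc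
  set T : Ω → ι → ℝ := fun ω => U ω - v ω • c with hT
  have hvT : HasGaussianLaw (fun ω => (v ω, T ω)) P := by
    have := hG.map_fun ((ContinuousLinearMap.fst ℝ ℝ (ι → ℝ)).prod
      (ContinuousLinearMap.snd ℝ ℝ (ι → ℝ) -
        (ContinuousLinearMap.fst ℝ ℝ (ι → ℝ)).smulRight c))
    simpa [hT] using! this
  have hcov : ∀ j, cov[v, fun ω => T ω j; P] = 0 := by
    intro j
    have hTj : MemLp (fun ω => T ω j) 2 P := by
      have := (hUj j).memLp_two.sub (hv2.const_mul (c j))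
      refine this.ae_eq (Filter.Eventually.of_forall fun ω => ?_)
      simp [hT]; ring
    rw [covariance_eq_sub hv2 hTj, hv0]
    simp only [hT, zero_mul, sub_zero, Pi.mul_apply, Pi.sub_apply, Pi.smul_apply, smul_eq_mul]
    have i1 : Integrable (fun ω => v ω * U ω j) P := hv2.integrable_mul (hUj j).memLp_two
    have : ∀ ω, v ω * (U ω j - v ω * c j) = v ω * U ω j - c j * v ω ^ 2 := fun ω => by ring
    simp_rw [this]
    rw [integral_sub i1 (hv2.integrable_sq.const_mul _), integral_const_mul, ← hs]
    simp only [hc]; field_simp; ring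
  have hind : IndepFun v T P := by
    refine hvT.indepFun_of_covariance_strongDual fun L₁ L₂ => ?_
    have hL1 : L₁ ∘ v = fun ω => L₁ 1 * v ω := by
      ext ω
      have := L₁.map_smul (v ω) 1
      simp at this; simp [this, mul_comm]
    have hL2 : L₂ ∘ T = fun ω => ∑ j, L₂ (Pi.single j 1) * T ω j := by
      ext ω
      have h : T ω = ∑ j, T ω j • (Pi.single j (1:ℝ) : ι → ℝ) := by
        ext i; simp [Finset.sum_apply, Pi.single_apply]
      simp only [Function.comp_apply]
      conv_lhs => rw [h]
      rw [map_sum]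
      exact Finset.sum_congr rfl fun j _ => by rw [map_smul, smul_eq_mul, mul_comm]
    have hTj : ∀ j, MemLp (fun ω => T ω j) 2 P := fun j => 
      (hvT.snd.map_fun (ContinuousLinearMap.proj (R := ℝ) (φ := fun _ : ι => ℝ) j)).memLp_two
    rw [hL1, hL2, covariance_const_mul_left, covariance_fun_sum_right]
    · simp [covariance_const_mul_right, hcov]
    · intro j; exact (hTj j).const_mul _
    · exact hv2
  have hvm := hvG.aemeasurable
  have hTm := hvT.snd.aemeasurable
  have hlaw := (indepFun_iff_map_prod_eq_prod_map_map hvm hTm).1 hind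
  set w : ℝ≥0 := s.toNNReal with hw
  have hwne : w ≠ 0 := by simpa [hw] using hspos
  have hws : (w : ℝ) = s := Real.coe_toNNReal _ hspos.le
  have hvlaw : P.map v = gaussianReal 0 w := by
    rw [hvG.map_eq_gaussianReal, hv0, hvar]
  rw [hvlaw] at hlaw
  set ν := P.map T with hν
  have : IsProbabilityMeasure ν := Measure.isProbabilityMeasure_map hTm
  have hUT : ∀ ω, U ω = T ω + v ω • c := fun ω => by simp [hT]
  have trI : ∀ F : ℝ × (ι → ℝ) → ℝ, Measurable F →
      Integrable (fun ω => F (v ω, T ω)) P → Integrable F ((gaussianReal 0 w).prod ν) := by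
    intro F hF hi
    rw [← hlaw]
    exact (integrable_map_measure hF.aestronglyMeasurable (hvm.prodMk hTm)).2 hi
  have trE : ∀ F : ℝ × (ι → ℝ) → ℝ, Measurable F →
      ∫ ω, F (v ω, T ω) ∂P = ∫ z, F z ∂((gaussianReal 0 w).prod ν) := by
    intro F hF
    rw [← hlaw, integral_map (hvm.prodMk hTm) hF.aestronglyMeasurable]
  let F1 : ℝ × (ι → ℝ) → ℝ := fun z => z.1 * ψ (z.2 + z.1 • c)
  let F2 : ℝ × (ι → ℝ) → ℝ := fun z => ψ (z.2 + z.1 • c)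
  let F3 : ℝ × (ι → ℝ) → ℝ := fun z => ∑ j, dψ j (z.2 + z.1 • c) * c j
  have hm : Measurable (fun z : ℝ × (ι → ℝ) => z.2 + z.1 • c) := by fun_prop
  have hF2 : Measurable F2 := hψm.comp hm
  have hF1 : Measurable F1 := measurable_fst.mul hF2
  have hF3 : Measurable F3 := Finset.measurable_sum _ fun j _ => ((hdm j).comp hm).mul_const _
  have h3' : Integrable (fun ω => ∑ j, dψ j (U ω) * c j) P :=
    integrable_finsetSum _ fun j _ => (h3 j).mul_const _
  have I1 := trI F1 hF1 (by simpa [F1, ← hUT] using h1)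
  have I2 := trI F2 hF2 (by simpa [F2, ← hUT] using h2)
  have I3 := trI F3 hF3 (by simpa [F3, ← hUT] using h3')
  have E1 := trE F1 hF1
  have E3 := trE F3 hF3
  simp only [F1, F3, ← hUT] at E1 E3
  have : ∑ j, (∫ ω, v ω * U ω j ∂P) * ∫ ω, dψ j (U ω) ∂P
      = s * ∫ ω, ∑ j, dψ j (U ω) * c j ∂P := by
    rw [integral_finsetSum _ fun j _ => (h3 j).mul_const _, Finset.mul_sum]
    refine Finset.sum_congr rfl fun j _ => ?_
    rw [integral_mul_const]
    simp only [hc]; field_simp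
  rw [this, E1, E3, integral_prod_symm _ I1, integral_prod_symm _ I3, ← integral_const_mul]
  refine integral_congr_ae ?_
  filter_upwards [I1.prod_left_ae, I2.prod_left_ae, I3.prod_left_ae] with u k1 k2 k3
  rw [← hws]
  exact stein_real w hwne (fun x => ψ (u + x • c)) _ (fun x => hψ u c x) k1 k2 k3

noncomputable def smS {ι : Type*} [Fintype ι] (x : ι → ℝ) : ℝ := 1 + ∑ i, Real.exp (x i)
noncomputable def smM {ι : Type*} [Fintype ι] (m : ℝ) (x : ι → ℝ) : ℝ := Real.log (smS x) + m
noncomputable def smP {ι : Type*} [Fintype ι] (i : ι) (x : ι → ℝ) : ℝ := Real.exp (x i) / smS x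
noncomputable def smF {ι : Type*} [Fintype ι] (m : ℝ) (x : ι → ℝ) : ℝ := smM m x ^ m
noncomputable def smF1 {ι : Type*} [Fintype ι] (m : ℝ) (i : ι) (x : ι → ℝ) : ℝ :=
  m * smM m x ^ (m - 1) * smP i x
noncomputable def smF2 {ι : Type*} [Fintype ι] [DecidableEq ι] (m : ℝ) (i j : ι) (x : ι → ℝ) : ℝ :=
  m * (m - 1) * smM m x ^ (m - 2) * (smP i x * smP j x)
    + m * smM m x ^ (m - 1) * ((if i = j then smP i x else 0) - smP i x * smP j x)

section
variable {ι : Type*} [Fintype ι]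

lemma smS_one_le (x : ι → ℝ) : 1 ≤ smS x := by
  unfold smS
  have : 0 ≤ ∑ i, Real.exp (x i) := Finset.sum_nonneg fun i _ => (Real.exp_pos _).le
  linarith

lemma smS_pos (x : ι → ℝ) : 0 < smS x := by linarith [smS_one_le x]

lemma smP_nonneg (i : ι) (x : ι → ℝ) : 0 ≤ smP i x := div_nonneg (Real.exp_pos _).le (smS_pos x).le

lemma smP_sum (x : ι → ℝ) : ∑ i, smP i x ≤ 1 := by
  unfold smP
  rw [← Finset.sum_div, div_le_one (smS_pos x)]
  unfold smS; linarith

lemma smP_le_one (i : ι) (x : ι → ℝ) : smP i x ≤ 1 :=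
  (Finset.single_le_sum (f := fun i => smP i x) (fun j _ => smP_nonneg j x)
    (Finset.mem_univ i)).trans (smP_sum x)

lemma smM_ge (m : ℝ) (x : ι → ℝ) : m ≤ smM m x := by
  unfold smM; linarith [Real.log_nonneg (smS_one_le x)]

lemma smM_ge_coord {m : ℝ} (hm : 0 ≤ m) (x : ι → ℝ) (i : ι) : x i ≤ smM m x := by
  have h1 : Real.exp (x i) ≤ smS x := by
    have := Finset.single_le_sum (f := fun i => Real.exp (x i)) (fun j _ => (Real.exp_pos _).le)
      (Finset.mem_univ i)
    unfold smS; linarith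
  have : x i ≤ Real.log (smS x) := (Real.le_log_iff_exp_le (smS_pos x)).2 h1
  unfold smM; linarith

lemma smM_le (m : ℝ) (x : ι → ℝ) {b : ℝ} (hb : 0 ≤ b) (h : ∀ i, x i ≤ b) :
    smM m x ≤ Real.log (1 + Fintype.card ι) + m + b := by
  have h1 : smS x ≤ (1 + Fintype.card ι) * Real.exp b := by
    have : ∑ i, Real.exp (x i) ≤ ∑ i : ι, Real.exp b :=
      Finset.sum_le_sum fun i _ => Real.exp_le_exp.2 (h i)
    simp at this
    have := Real.one_le_exp hb
    unfold smS; linarith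
  have := Real.log_le_log (smS_pos x) h1
  rw [Real.log_mul (by positivity) (Real.exp_pos _).ne', Real.log_exp] at this
  unfold smM; linarith

lemma smS_meas : Measurable (smS : (ι → ℝ) → ℝ) := by unfold smS; fun_prop
lemma smM_meas (m : ℝ) : Measurable (smM m : (ι → ℝ) → ℝ) := (smS_meas.log).add_const _
lemma smP_meas (i : ι) : Measurable (smP i : (ι → ℝ) → ℝ) :=
  Measurable.div (by fun_prop) smS_meas
lemma smF_meas (m : ℝ) : Measurable (smF m : (ι → ℝ) → ℝ) := (smM_meas m).pow_const _
lemma smF1_meas (m : ℝ) (i : ι) : Measurable (smF1 m i : (ι → ℝ) → ℝ) :=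
  (((smM_meas m).pow_const _).const_mul _).mul (smP_meas i)
lemma smF2_meas [DecidableEq ι] (m : ℝ) (i j : ι) : Measurable (smF2 m i j : (ι → ℝ) → ℝ) := by
  unfold smF2
  have h1 := smM_meas (ι := ι) m
  have h2 := smP_meas (ι := ι) i
  have h3 := smP_meas (ι := ι) j
  split_ifs <;> fun_prop

lemma smS_deriv (x : ℝ → ι → ℝ) (x' : ι → ℝ) (t : ℝ)
    (h : ∀ i, HasDerivAt (fun s => x s i) (x' i) t) :
    HasDerivAt (fun s => smS (x s)) (∑ i, Real.exp (x t i) * x' i) t :=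
  (HasDerivAt.fun_sum fun i _ => (h i).exp).const_add 1

lemma smM_deriv (m : ℝ) (x : ℝ → ι → ℝ) (x' : ι → ℝ) (t : ℝ)
    (h : ∀ i, HasDerivAt (fun s => x s i) (x' i) t) :
    HasDerivAt (fun s => smM m (x s)) (∑ i, smP i (x t) * x' i) t := by
  refine (((smS_deriv x x' t h).log (smS_pos _).ne').add_const m).congr_deriv ?_
  rw [Finset.sum_div]
  exact Finset.sum_congr rfl fun i _ => by unfold smP; ring

lemma smP_deriv (i : ι) (x : ℝ → ι → ℝ) (x' : ι → ℝ) (t : ℝ)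
    (h : ∀ i, HasDerivAt (fun s => x s i) (x' i) t) :
    HasDerivAt (fun s => smP i (x s))
      (smP i (x t) * x' i - smP i (x t) * ∑ j, smP j (x t) * x' j) t := by
  refine (((h i).exp).div (smS_deriv x x' t h) (smS_pos _).ne').congr_deriv ?_
  have : ∑ j, smP j (x t) * x' j = (∑ i, Real.exp (x t i) * x' i) / smS (x t) := by
    rw [Finset.sum_div]
    exact Finset.sum_congr rfl fun i _ => by unfold smP; ring
  rw [this]
  have := (smS_pos (x t)).ne'
  unfold smP; field_simp

lemma smF_deriv {m : ℝ} (hm : 1 ≤ m) (x : ℝ → ι → ℝ) (x' : ι → ℝ) (t : ℝ)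
    (h : ∀ i, HasDerivAt (fun s => x s i) (x' i) t) :
    HasDerivAt (fun s => smF m (x s)) (∑ i, smF1 m i (x t) * x' i) t := by
  have hpos : smM m (x t) ≠ 0 := by linarith [smM_ge m (x t)]
  refine ((smM_deriv m x x' t h).rpow_const (p := m) (Or.inl hpos)).congr_deriv ?_
  unfold smF1
  rw [Finset.sum_mul, Finset.sum_mul]
  exact Finset.sum_congr rfl fun i _ => by ring

lemma smF1_deriv [DecidableEq ι] {m : ℝ} (hm : 1 ≤ m) (i : ι) (x : ℝ → ι → ℝ) (x' : ι → ℝ) (t : ℝ)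
    (h : ∀ i, HasDerivAt (fun s => x s i) (x' i) t) :
    HasDerivAt (fun s => smF1 m i (x s)) (∑ j, smF2 m i j (x t) * x' j) t := by
  have hpos : smM m (x t) ≠ 0 := by linarith [smM_ge m (x t)]
  refine ((((smM_deriv m x x' t h).rpow_const (p := m - 1) (Or.inl hpos)).const_mul m).mul
    (smP_deriv i x x' t h)).congr_deriv ?_
  set q := ∑ j, smP j (x t) * x' j with hq
  have : ∀ j, smF2 m i j (x t) * x' j
      = (m * (m - 1) * smM m (x t) ^ (m - 2) * smP i (x t)) * (smP j (x t) * x' j)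
        + m * smM m (x t) ^ (m - 1) * ((if i = j then smP i (x t) * x' j else 0)
          - smP i (x t) * (smP j (x t) * x' j)) := by
    intro j
    unfold smF2
    split_ifs <;> ring
  simp only [this, Finset.sum_add_distrib, ← Finset.mul_sum, Finset.sum_sub_distrib,
      Finset.sum_ite_eq, Finset.mem_univ, if_true, ← hq]
  rw [show m - 1 - 1 = m - 2 by ring]
  ring

lemma smF1_bound {m : ℝ} (hm : 1 ≤ m) (i : ι) (x : ι → ℝ) :
    |smF1 m i x| ≤ m * smM m x ^ m := by
  have h1 : 1 ≤ smM m x := hm.trans (smM_ge m x)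
  have h2 : smM m x ^ (m - 1) ≤ smM m x ^ m := Real.rpow_le_rpow_of_exponent_le h1 (by linarith)
  have h3 : 0 ≤ smM m x ^ (m - 1) := by positivity
  have h4 := smP_nonneg i x
  have h5 := smP_le_one i x
  unfold smF1
  rw [abs_of_nonneg (by positivity)]
  calc _ ≤ m * smM m x ^ m * 1 := by gcongr
    _ = _ := mul_one _

lemma smF2_bound [DecidableEq ι] {m : ℝ} (hm : 1 ≤ m) (i j : ι) (x : ι → ℝ) :
    |smF2 m i j x| ≤ (m * (m - 1) + m) * smM m x ^ m := by
  have h1 : 1 ≤ smM m x := hm.trans (smM_ge m x)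
  have h2 : smM m x ^ (m - 1) ≤ smM m x ^ m := Real.rpow_le_rpow_of_exponent_le h1 (by linarith)
  have h2' : smM m x ^ (m - 2) ≤ smM m x ^ m := Real.rpow_le_rpow_of_exponent_le h1 (by linarith)
  have h3 : 0 ≤ smM m x ^ (m - 1) := by positivity
  have h3' : 0 ≤ smM m x ^ (m - 2) := by positivity
  have hm1 : 0 ≤ m - 1 := by linarith
  have a1 := smP_nonneg i x
  have a2 := smP_le_one i x
  have b1 := smP_nonneg j x
  have b2 := smP_le_one j x
  have c1 : 0 ≤ smP i x * smP j x := by positivity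
  have c2 : smP i x * smP j x ≤ 1 := mul_le_one₀ a2 b1 b2
  unfold smF2
  rw [add_mul]
  refine (abs_add_le _ _).trans (add_le_add ?_ ?_)
  · rw [abs_of_nonneg (by positivity)]
    calc _ ≤ m * (m - 1) * smM m x ^ m * 1 := by gcongr
      _ = _ := mul_one _
  · rw [abs_mul, abs_of_nonneg (by positivity)]
    have : |(if i = j then smP i x else 0) - smP i x * smP j x| ≤ 1 := by
      rw [abs_le]; split_ifs <;> constructor <;> linarith
    calc _ ≤ m * smM m x ^ m * 1 := by gcongr
      _ = _ := mul_one _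

lemma smF2_sum_nonneg [DecidableEq ι] {m : ℝ} (hm : 1 ≤ m) (D : ι → ι → ℝ) (hD : ∀ i, 0 ≤ D i i)
    (hinc : ∀ i j, 0 ≤ D i i + D j j - D i j - D j i) (x : ι → ℝ) :
    0 ≤ ∑ i, ∑ j, D i j * smF2 m i j x := by
  set p := fun i => smP i x with hp
  set Q := ∑ i, ∑ j, D i j * (p i * p j) with hQ
  set T := ∑ i, D i i * p i with hT
  have hM : m ≤ smM m x := smM_ge m x
  have hMpos : 0 < smM m x := by linarith
  have hTn : 0 ≤ T := Finset.sum_nonneg fun i _ => mul_nonneg (hD i) (smP_nonneg i x)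
  have hs : ∑ i, p i ≤ 1 := smP_sum x
  have hQT : Q ≤ T := by
    have e1 : ∑ i, ∑ j, D i i * (p i * p j) = T * ∑ j, p j := by
      rw [hT, Finset.sum_mul_sum]
      exact Finset.sum_congr rfl fun i _ => Finset.sum_congr rfl fun j _ => by ring
    have e2 : ∑ i, ∑ j, D j j * (p i * p j) = T * ∑ j, p j := by
      rw [Finset.sum_comm, ← e1]
      exact Finset.sum_congr rfl fun i _ => Finset.sum_congr rfl fun j _ => by ring
    have e3 : ∑ i, ∑ j, D j i * (p i * p j) = Q := by
      rw [Finset.sum_comm, hQ]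
      exact Finset.sum_congr rfl fun i _ => Finset.sum_congr rfl fun j _ => by ring
    have h0 : 0 ≤ ∑ i, ∑ j, (D i i + D j j - D i j - D j i) * (p i * p j) :=
      Finset.sum_nonneg fun i _ => Finset.sum_nonneg fun j _ =>
        mul_nonneg (hinc i j) (mul_nonneg (smP_nonneg i x) (smP_nonneg j x))
    simp only [add_mul, sub_mul, Finset.sum_add_distrib, Finset.sum_sub_distrib, e1, e2, e3,
      ← hQ] at h0
    nlinarith
  have e : ∑ i, ∑ j, D i j * smF2 m i j x
      = m * (m - 1) * smM m x ^ (m - 2) * Q + m * smM m x ^ (m - 1) * (T - Q) := by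
    have : ∀ i j, D i j * smF2 m i j x = m * (m - 1) * smM m x ^ (m - 2) * (D i j * (p i * p j))
        + m * smM m x ^ (m - 1) * ((if i = j then D i j * p i else 0) - D i j * (p i * p j)) := by
      intro i j
      unfold smF2
      split_ifs <;> simp only [hp] <;> ring
    simp only [this, Finset.sum_add_distrib, ← Finset.mul_sum, Finset.sum_sub_distrib,
      Finset.sum_ite_eq, Finset.mem_univ, if_true, ← hQ, ← hT]
  have hpow : smM m x ^ (m - 1) = smM m x ^ (m - 2) * smM m x := by
    rw [← Real.rpow_add_one hMpos.ne']; ring_nf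
  rw [e, hpow]
  have ha : 0 ≤ m * smM m x ^ (m - 2) := by positivity
  have : m * (m - 1) * smM m x ^ (m - 2) * Q + m * (smM m x ^ (m - 2) * smM m x) * (T - Q)
    = (m * smM m x ^ (m - 2)) * ((smM m x - (m - 1)) * (T - Q) + (m - 1) * T) := by ring
  rw [this]
  refine mul_nonneg ha (add_nonneg (mul_nonneg ?_ ?_) (mul_nonneg ?_ hTn)) <;> linarith
end

lemma int_four {Ω : Type*} [MeasurableSpace Ω] {P : Measure Ω} {a b c d : Ω → ℝ} (p q r s : ℝ)
    (ha : Integrable a P) (hb : Integrable b P) (hc : Integrable c P) (hd : Integrable d P) :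
    ∫ ω, (p * a ω + q * b ω + r * c ω + s * d ω) ∂P
      = p * ∫ ω, a ω ∂P + q * ∫ ω, b ω ∂P + r * ∫ ω, c ω ∂P + s * ∫ ω, d ω ∂P := by
  have ha' := ha.const_mul p
  have hb' := hb.const_mul q
  have hc' := hc.const_mul r
  have hd' := hd.const_mul s
  rw [integral_add (by fun_prop) (by fun_prop), integral_add (by fun_prop) (by fun_prop),
    integral_add (by fun_prop) (by fun_prop)]
  simp only [integral_const_mul]

set_option maxHeartbeats 1000000 in
lemma smF_compare {Ω ι : Type*} [MeasurableSpace Ω] [Fintype ι] {P : Measure Ω}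
    [IsProbabilityMeasure P] (Z W : Ω → ι → ℝ)
    (hG : HasGaussianLaw (fun ω => (Z ω, W ω)) P)
    (hZ0 : ∀ i, ∫ ω, Z ω i ∂P = 0) (hW0 : ∀ i, ∫ ω, W ω i ∂P = 0)
    (hcov : ∀ i j, ∫ ω, Z ω i * W ω j ∂P = 0)
    (hvar : ∀ i, ∫ ω, Z ω i ^ 2 ∂P ≤ ∫ ω, W ω i ^ 2 ∂P)
    (hinc : ∀ i j, ∫ ω, (Z ω i - Z ω j) ^ 2 ∂P ≤ ∫ ω, (W ω i - W ω j) ^ 2 ∂P)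
    {m : ℝ} (hm : 1 ≤ m) :
    Integrable (fun ω => smF m (Z ω)) P ∧ ∫ ω, smF m (Z ω) ∂P ≤ ∫ ω, smF m (W ω) ∂P := by
  classical
  have hZi : ∀ i, HasGaussianLaw (fun ω => Z ω i) P := fun i =>
    hG.fst.map_fun (ContinuousLinearMap.proj (R := ℝ) (φ := fun _ : ι => ℝ) i)
  have hWi : ∀ i, HasGaussianLaw (fun ω => W ω i) P := fun i =>
    hG.snd.map_fun (ContinuousLinearMap.proj (R := ℝ) (φ := fun _ : ι => ℝ) i)
  set U : ℝ → Ω → ι → ℝ := fun θ ω i => Real.cos θ * Z ω i + Real.sin θ * W ω i with hU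
  set V : ℝ → Ω → ι → ℝ := fun θ ω i => -Real.sin θ * Z ω i + Real.cos θ * W ω i with hV
  set b : Ω → ℝ := fun ω => ∑ i, (|Z ω i| + |W ω i|) with hb
  set K : Ω → ℝ := fun ω => (Real.log (1 + Fintype.card ι) + m) + b ω with hK
  have hC : 1 ≤ Real.log (1 + Fintype.card ι) + m := by
    have : 0 ≤ Real.log (1 + Fintype.card ι) := Real.log_nonneg (by simp)
    linarith
  have hb0 : ∀ ω, 0 ≤ b ω := fun ω => Finset.sum_nonneg fun i _ => by positivity
  have hK1 : ∀ ω, 1 ≤ K ω := fun ω => by simp only [hK]; linarith [hb0 ω]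
  have hbi : ∀ ω i, |Z ω i| + |W ω i| ≤ b ω := fun ω i =>
    Finset.single_le_sum (f := fun i => |Z ω i| + |W ω i|) (fun j _ => by positivity)
      (Finset.mem_univ i)
  have hlin : ∀ p q z w : ℝ, |p| ≤ 1 → |q| ≤ 1 → |p * z + q * w| ≤ |z| + |w| := by
    intro p q z w hp hq
    refine (abs_add_le _ _).trans ?_
    rw [abs_mul, abs_mul]
    exact add_le_add (mul_le_of_le_one_left (abs_nonneg _) hp)
      (mul_le_of_le_one_left (abs_nonneg _) hq)
  have hUb : ∀ θ ω i, |U θ ω i| ≤ b ω := fun θ ω i =>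
    (hlin _ _ _ _ (Real.abs_cos_le_one θ) (Real.abs_sin_le_one θ)).trans (hbi ω i)
  have hVb : ∀ θ ω i, |V θ ω i| ≤ K ω := fun θ ω i =>
    ((hlin _ _ _ _ (by simpa using Real.abs_sin_le_one θ) (Real.abs_cos_le_one θ)).trans
      (hbi ω i)).trans (by simp only [hK]; linarith)
  have hMK : ∀ θ ω, smM m (U θ ω) ≤ K ω := fun θ ω =>
    smM_le m _ (hb0 ω) fun i => (le_abs_self _).trans (hUb θ ω i)
  have hM1 : ∀ θ ω, 1 ≤ smM m (U θ ω) := fun θ ω => hm.trans (smM_ge m _)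
  have hMKm : ∀ θ ω, smM m (U θ ω) ^ m ≤ K ω ^ m := fun θ ω =>
    Real.rpow_le_rpow (by linarith [hM1 θ ω]) (hMK θ ω) (by linarith)
  have hKm : ∀ ω, K ω ^ m ≤ K ω ^ (m + 1) := fun ω =>
    Real.rpow_le_rpow_of_exponent_le (hK1 ω) (by linarith)
  have hKmul : ∀ ω, K ω ^ (m + 1) = K ω ^ m * K ω := fun ω =>
    Real.rpow_add_one (by linarith [hK1 ω]) m
  have hKint : Integrable (fun ω => K ω ^ (m + 1)) P := by
    have hb' : MemLp b (ENNReal.ofReal (m + 1)) P :=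
      memLp_finsetSum Finset.univ (f := fun i ω => |Z ω i| + |W ω i|) fun i _ =>
        MemLp.add (f := fun ω => |Z ω i|) (g := fun ω => |W ω i|)
          (((hZi i).memLp ENNReal.ofReal_ne_top).abs) (((hWi i).memLp ENNReal.ofReal_ne_top).abs)
    have hK' : MemLp K (ENNReal.ofReal (m + 1)) P := by
      have h1 : MemLp (fun _ : Ω => Real.log (1 + Fintype.card ι) + m) (ENNReal.ofReal (m + 1)) P :=
        memLp_const _
      exact h1.add hb'
    have := hK'.integrable_norm_rpow (by simp; linarith) (by simp)
    refine this.congr (Filter.Eventually.of_forall fun ω => ?_)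
    have : 0 ≤ K ω := by linarith [hK1 ω]
    simp only [Real.norm_eq_abs, abs_of_nonneg this]
    rw [ENNReal.toReal_ofReal (by linarith)]
  have hUV : ∀ θ, HasGaussianLaw (fun ω => (V θ ω, U θ ω)) P := by
    intro θ
    have := hG.map_fun ((((-Real.sin θ) • ContinuousLinearMap.fst ℝ (ι → ℝ) (ι → ℝ)) +
      (Real.cos θ) • ContinuousLinearMap.snd ℝ (ι → ℝ) (ι → ℝ)).prod
        (((Real.cos θ) • ContinuousLinearMap.fst ℝ (ι → ℝ) (ι → ℝ)) +
      (Real.sin θ) • ContinuousLinearMap.snd ℝ (ι → ℝ) (ι → ℝ)))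
    exact this
  have hUm : ∀ θ, AEMeasurable (U θ) P := fun θ => (hUV θ).snd.aemeasurable
  have hVG : ∀ θ i, HasGaussianLaw (fun ω => (V θ ω i, U θ ω)) P := by
    intro θ i
    exact (hUV θ).map_fun
      (((ContinuousLinearMap.proj (R := ℝ) (φ := fun _ : ι => ℝ) i).comp
        (ContinuousLinearMap.fst ℝ (ι → ℝ) (ι → ℝ))).prod
        (ContinuousLinearMap.snd ℝ (ι → ℝ) (ι → ℝ)))
  have hVm : ∀ θ i, AEMeasurable (fun ω => V θ ω i) P := fun θ i => (hVG θ i).fst.aemeasurable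
  -- integrability
  have iF : ∀ θ, Integrable (fun ω => smF m (U θ ω)) P := by
    intro θ
    refine hKint.mono' ((smF_meas m).comp_aemeasurable (hUm θ)).aestronglyMeasurable
      (Filter.Eventually.of_forall fun ω => ?_)
    have : 0 ≤ smM m (U θ ω) := by linarith [hM1 θ ω]
    rw [Real.norm_eq_abs, smF, abs_of_nonneg (by positivity)]
    exact (hMKm θ ω).trans (hKm ω)
  have iF1 : ∀ θ i, Integrable (fun ω => smF1 m i (U θ ω)) P := by
    intro θ i
    refine (hKint.const_mul m).mono'
      ((smF1_meas m i).comp_aemeasurable (hUm θ)).aestronglyMeasurable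
      (Filter.Eventually.of_forall fun ω => ?_)
    refine (smF1_bound hm i _).trans ?_
    exact mul_le_mul_of_nonneg_left ((hMKm θ ω).trans (hKm ω)) (by linarith)
  have iF2 : ∀ θ i j, Integrable (fun ω => smF2 m i j (U θ ω)) P := by
    intro θ i j
    refine (hKint.const_mul (m * (m - 1) + m)).mono'
      ((smF2_meas m i j).comp_aemeasurable (hUm θ)).aestronglyMeasurable
      (Filter.Eventually.of_forall fun ω => ?_)
    refine (smF2_bound hm i j _).trans ?_
    exact mul_le_mul_of_nonneg_left ((hMKm θ ω).trans (hKm ω)) (by nlinarith)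
  have bV : ∀ θ i ω, |V θ ω i * smF1 m i (U θ ω)| ≤ m * K ω ^ (m + 1) := by
    intro θ i ω
    have h0 : 0 ≤ K ω := by linarith [hK1 ω]
    rw [abs_mul, hKmul]
    calc _ ≤ K ω * (m * K ω ^ m) := by
          gcongr
          · exact hVb θ ω i
          · exact (smF1_bound hm i _).trans
              (mul_le_mul_of_nonneg_left (hMKm θ ω) (by linarith))
      _ = _ := by ring
  have iVF : ∀ θ i, Integrable (fun ω => V θ ω i * smF1 m i (U θ ω)) P := by
    intro θ i
    exact (hKint.const_mul m).mono'
      ((hVm θ i).mul ((smF1_meas m i).comp_aemeasurable (hUm θ))).aestronglyMeasurable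
      (Filter.Eventually.of_forall fun ω => bV θ i ω)
  -- derivative
  have hder : ∀ θ, HasDerivAt (fun θ => ∫ ω, smF m (U θ ω) ∂P)
      (∫ ω, ∑ i, V θ ω i * smF1 m i (U θ ω) ∂P) θ := by
    intro θ
    refine (hasDerivAt_integral_of_dominated_loc_of_deriv_le (s := Set.univ)
      (F := fun θ ω => smF m (U θ ω)) (F' := fun θ ω => ∑ i, V θ ω i * smF1 m i (U θ ω))
      (bound := fun ω => ∑ _i : ι, m * K ω ^ (m + 1))
      Filter.univ_mem (Filter.Eventually.of_forall fun θ => (iF θ).aestronglyMeasurable)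
      (iF θ) (integrable_finsetSum _ fun i _ => iVF θ i).aestronglyMeasurable
      (Filter.Eventually.of_forall fun ω θ _ => ?_)
      (integrable_finsetSum _ fun i _ => hKint.const_mul m)
      (Filter.Eventually.of_forall fun ω θ _ => ?_)).2
    · exact (norm_sum_le _ _).trans (Finset.sum_le_sum fun i _ => bV θ i ω)
    · have := smF_deriv hm (fun θ => U θ ω) (V θ ω) θ (fun i =>
        ((Real.hasDerivAt_cos θ).mul_const _).add ((Real.hasDerivAt_sin θ).mul_const _))
      exact this.congr_deriv (Finset.sum_congr rfl fun i _ => mul_comm _ _)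
  have hZZ : ∀ i j, Integrable (fun ω => Z ω i * Z ω j) P := fun i j =>
    (hZi i).memLp_two.integrable_mul (hZi j).memLp_two
  have hZW : ∀ i j, Integrable (fun ω => Z ω i * W ω j) P := fun i j =>
    (hZi i).memLp_two.integrable_mul (hWi j).memLp_two
  have hWW : ∀ i j, Integrable (fun ω => W ω i * W ω j) P := fun i j =>
    (hWi i).memLp_two.integrable_mul (hWi j).memLp_two
  set D : ι → ι → ℝ := fun i j => ∫ ω, W ω i * W ω j ∂P - ∫ ω, Z ω i * Z ω j ∂P with hD
  have hD0 : ∀ i, 0 ≤ D i i := by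
    intro i
    have := hvar i
    simp only [pow_two] at this
    simp only [hD]; linarith
  have hexp : ∀ (A : Ω → ι → ℝ), (∀ i j, Integrable (fun ω => A ω i * A ω j) P) → ∀ i j,
      ∫ ω, (A ω i - A ω j) ^ 2 ∂P = ∫ ω, A ω i * A ω i ∂P + ∫ ω, A ω j * A ω j ∂P
        - ∫ ω, A ω i * A ω j ∂P - ∫ ω, A ω j * A ω i ∂P := by
    intro A hA i j
    have : ∀ ω, (A ω i - A ω j) ^ 2
        = A ω i * A ω i + A ω j * A ω j - A ω i * A ω j - A ω j * A ω i := fun ω => by ring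
    simp_rw [this]
    have := int_four 1 1 (-1) (-1) (hA i i) (hA j j) (hA i j) (hA j i)
    simp only [one_mul, neg_mul, ← sub_eq_add_neg] at this
    exact this
  have hDinc : ∀ i j, 0 ≤ D i i + D j j - D i j - D j i := by
    intro i j
    have := hinc i j
    rw [hexp Z hZZ, hexp W hWW] at this
    simp only [hD]; linarith
  have hVU : ∀ θ i j, ∫ ω, V θ ω i * U θ ω j ∂P = Real.sin θ * Real.cos θ * D i j := by
    intro θ i j
    have : ∀ ω, V θ ω i * U θ ω j = Real.sin θ * Real.cos θ * (W ω i * W ω j)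
        + (-(Real.sin θ * Real.cos θ)) * (Z ω i * Z ω j) + (-Real.sin θ ^ 2) * (Z ω i * W ω j)
        + Real.cos θ ^ 2 * (Z ω j * W ω i) := fun ω => by simp only [hU, hV]; ring
    simp_rw [this]
    rw [int_four _ _ _ _ (hWW i j) (hZZ i j) (hZW i j) (hZW j i)]
    simp only [hcov, hD]; ring
  have hV0 : ∀ θ i, ∫ ω, V θ ω i ∂P = 0 := by
    intro θ i
    simp only [hV]
    rw [integral_add ((hZi i).integrable.const_mul _) ((hWi i).integrable.const_mul _)]
    simp only [integral_const_mul, hZ0, hW0]; ring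
  have hder_eq : ∀ θ, ∫ ω, ∑ i, V θ ω i * smF1 m i (U θ ω) ∂P
      = Real.sin θ * Real.cos θ * ∫ ω, ∑ i, ∑ j, D i j * smF2 m i j (U θ ω) ∂P := by
    intro θ
    rw [integral_finsetSum _ fun i _ => iVF θ i, integral_finsetSum _ fun i _ =>
      integrable_finsetSum _ fun j _ => (iF2 θ i j).const_mul _, Finset.mul_sum]
    refine Finset.sum_congr rfl fun i _ => ?_
    rw [stein_vec (fun ω => V θ ω i) (U θ) (hVG θ i) (hV0 θ i) (smF1 m i) (fun j => smF2 m i j)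
      (smF1_meas m i) (fun j => smF2_meas m i j) ?_ (iVF θ i) (iF1 θ i) (fun j => iF2 θ i j),
      integral_finsetSum _ fun j _ => (iF2 θ i j).const_mul _, Finset.mul_sum]
    · refine Finset.sum_congr rfl fun j _ => ?_
      rw [hVU, integral_const_mul]; ring
    · intro x c t
      refine smF1_deriv hm i (fun t : ℝ => x + t • c) c t fun j => ?_
      have := ((hasDerivAt_id t).mul_const (c j)).const_add (x j)
      simpa using! this
  have hmono : MonotoneOn (fun θ => ∫ ω, smF m (U θ ω) ∂P) (Set.Icc 0 (π / 2)) := by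
    refine monotoneOn_of_deriv_nonneg (convex_Icc _ _)
      (fun θ _ => (hder θ).continuousAt.continuousWithinAt)
      (fun θ _ => (hder θ).differentiableAt.differentiableWithinAt) ?_
    intro θ hθ
    rw [interior_Icc] at hθ
    rw [(hder θ).deriv, hder_eq]
    refine mul_nonneg (mul_nonneg ?_ ?_) (integral_nonneg fun ω => ?_)
    · exact Real.sin_nonneg_of_nonneg_of_le_pi hθ.1.le (by linarith [hθ.2, Real.pi_pos])
    · exact Real.cos_nonneg_of_mem_Icc ⟨by linarith [hθ.1, Real.pi_pos], hθ.2.le⟩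
    · exact smF2_sum_nonneg hm D hD0 hDinc _
  have hpi := Real.pi_pos
  have := hmono (Set.left_mem_Icc.2 (by linarith)) (Set.right_mem_Icc.2 (by linarith))
    (by linarith)
  refine ⟨by simpa [hU] using! iF 0, by simpa [hU] using! this⟩

lemma cmp_limit {Ω ι : Type*} [MeasurableSpace Ω] [Fintype ι] {P : Measure Ω}
    [IsProbabilityMeasure P] (Z W : Ω → ι → ℝ)
    (hG : HasGaussianLaw (fun ω => (Z ω, W ω)) P)
    (hZ0 : ∀ i, ∫ ω, Z ω i ∂P = 0) (hW0 : ∀ i, ∫ ω, W ω i ∂P = 0)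
    (hcov : ∀ i j, ∫ ω, Z ω i * W ω j ∂P = 0)
    (hvar : ∀ i, ∫ ω, Z ω i ^ 2 ∂P ≤ ∫ ω, W ω i ^ 2 ∂P)
    (hinc : ∀ i j, ∫ ω, (Z ω i - Z ω j) ^ 2 ∂P ≤ ∫ ω, (W ω i - W ω j) ^ 2 ∂P)
    {m : ℝ} (hm : 1 ≤ m) (A B : Ω → ℝ) (hA : ∀ ω, 0 ≤ A ω) (hB : ∀ ω, 0 ≤ B ω)
    (hAZ : ∀ ω b, 0 ≤ b → (∀ i, Z ω i ≤ b) → A ω ≤ b)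
    (hBW : ∀ ω i, W ω i ≤ B ω) (hBm : MemLp B (ENNReal.ofReal m) P) :
    ∫ ω, A ω ^ m ∂P ≤ ∫ ω, B ω ^ m ∂P := by
  set C : ℝ := Real.log (1 + Fintype.card ι) + m with hC
  have hC0 : 0 ≤ C := by
    have : 0 ≤ Real.log (1 + Fintype.card ι) := Real.log_nonneg (by simp)
    linarith
  have hint : ∀ c : ℝ, 0 ≤ c → Integrable (fun ω => (B ω + c) ^ m) P := by
    intro c hc
    have h1 : MemLp (fun _ : Ω => c) (ENNReal.ofReal m) P := memLp_const _
    have h2 : MemLp (fun ω => B ω + c) (ENNReal.ofReal m) P := hBm.add h1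
    have := h2.integrable_norm_rpow (by simp; linarith) (by simp)
    refine this.congr (Filter.Eventually.of_forall fun ω => ?_)
    have : 0 ≤ B ω + c := by linarith [hB ω]
    simp only [Real.norm_eq_abs, abs_of_nonneg this]
    rw [ENNReal.toReal_ofReal (by linarith)]
  have hstep : ∀ n : ℕ, ∫ ω, A ω ^ m ∂P ≤ ∫ ω, (B ω + C / (n + 1)) ^ m ∂P := by
    intro n
    set l : ℝ := (n : ℝ) + 1 with hl
    have hl0 : 0 < l := by positivity
    have hG' : HasGaussianLaw (fun ω => ((fun i => l * Z ω i), (fun i => l * W ω i))) P :=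
      hG.fun_smul l
    obtain ⟨hi, hle⟩ := smF_compare (fun ω i => l * Z ω i) (fun ω i => l * W ω i) hG'
      (fun i => by rw [integral_const_mul, hZ0, mul_zero])
      (fun i => by rw [integral_const_mul, hW0, mul_zero])
      (fun i j => by
        have : ∀ ω, l * Z ω i * (l * W ω j) = l ^ 2 * (Z ω i * W ω j) := fun ω => by ring
        simp_rw [this]
        rw [integral_const_mul, hcov, mul_zero])
      (fun i => by
        simp_rw [mul_pow]
        rw [integral_const_mul, integral_const_mul]
        exact mul_le_mul_of_nonneg_left (hvar i) (by positivity))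
      (fun i j => by
        simp_rw [← mul_sub, mul_pow]
        rw [integral_const_mul, integral_const_mul]
        exact mul_le_mul_of_nonneg_left (hinc i j) (by positivity)) hm
    have h1 : ∀ ω, l * A ω ≤ smM m (fun i => l * Z ω i) := by
      intro ω
      have h0 : 0 ≤ smM m (fun i => l * Z ω i) := by
        linarith [smM_ge m (fun i => l * Z ω i)]
      have := hAZ ω (smM m (fun i => l * Z ω i) / l) (by positivity) (fun i => by
        rw [le_div_iff₀ hl0, mul_comm]
        exact smM_ge_coord (by linarith) (fun i => l * Z ω i) i)
      rwa [le_div_iff₀ hl0, mul_comm] at this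
    have h2 : ∀ ω, smM m (fun i => l * W ω i) ≤ l * (B ω + C / l) := by
      intro ω
      have := smM_le m (fun i => l * W ω i) (b := l * B ω)
        (mul_nonneg hl0.le (hB ω)) (fun i => mul_le_mul_of_nonneg_left (hBW ω i) hl0.le)
      have h3 : l * (B ω + C / l) = C + l * B ω := by field_simp; ring
      rw [h3]; exact this
    have hlm : 0 < l ^ m := by positivity
    have h3 : ∫ ω, l ^ m * A ω ^ m ∂P ≤ ∫ ω, smF m (fun i => l * Z ω i) ∂P := by
      refine integral_mono_of_nonneg (Filter.Eventually.of_forall fun ω => ?_) hi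
        (Filter.Eventually.of_forall fun ω => ?_)
      · have := hA ω
        simp only [Pi.zero_apply]; positivity
      · simp only [smF]
        rw [← Real.mul_rpow hl0.le (hA ω)]
        exact Real.rpow_le_rpow (mul_nonneg hl0.le (hA ω)) (h1 ω) (by linarith)
    have h4 : ∫ ω, smF m (fun i => l * W ω i) ∂P ≤ ∫ ω, l ^ m * (B ω + C / l) ^ m ∂P := by
      refine integral_mono_of_nonneg (Filter.Eventually.of_forall fun ω => ?_)
        ((hint (C / l) (by positivity)).const_mul _)
        (Filter.Eventually.of_forall fun ω => ?_)
      · have : 0 ≤ smM m (fun i => l * W ω i) := by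
          linarith [smM_ge m (fun i => l * W ω i)]
        simp only [Pi.zero_apply, smF]; positivity
      · simp only [smF]
        have : 0 ≤ smM m (fun i => l * W ω i) := by
          linarith [smM_ge m (fun i => l * W ω i)]
        rw [← Real.mul_rpow hl0.le (add_nonneg (hB ω) (by positivity))]
        exact Real.rpow_le_rpow this (h2 ω) (by linarith)
    have h5 := (h3.trans hle).trans h4
    rw [integral_const_mul, integral_const_mul] at h5
    exact le_of_mul_le_mul_left h5 hlm
  have hlim : Filter.Tendsto (fun n : ℕ => ∫ ω, (B ω + C / ((n : ℝ) + 1)) ^ m ∂P) Filter.atTop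
      (nhds (∫ ω, B ω ^ m ∂P)) := by
    refine tendsto_integral_of_dominated_convergence (fun ω => (B ω + C) ^ m)
      (fun n => (hint _ (by positivity)).aestronglyMeasurable) (hint C hC0)
      (fun n => Filter.Eventually.of_forall fun ω => ?_)
      (Filter.Eventually.of_forall fun ω => ?_)
    · have h0 : 0 ≤ C / ((n : ℝ) + 1) := by positivity
      have hh := hB ω
      rw [Real.norm_eq_abs, abs_of_nonneg (by positivity)]
      refine Real.rpow_le_rpow (by positivity) ?_ (by linarith)
      have : C / ((n : ℝ) + 1) ≤ C := div_le_self hC0 (by linarith [n.cast_nonneg (α := ℝ)])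
      linarith
    · have h0 : Filter.Tendsto (fun n : ℕ => B ω + C / ((n : ℝ) + 1)) Filter.atTop
          (nhds (B ω + 0)) := by
        refine tendsto_const_nhds.add ?_
        have := (tendsto_one_div_add_atTop_nhds_zero_nat (𝕜 := ℝ)).const_mul C
        simpa [div_eq_mul_inv] using this
      rw [add_zero] at h0
      exact h0.rpow_const (Or.inr (by linarith))
  exact ge_of_tendsto' hlim hstep

lemma iSup_abs_eq_norm {k : ℕ} (x : Fin k → ℝ) : (⨆ i, |x i|) = ‖x‖ := by
  apply le_antisymm
  · exact Real.iSup_le (fun i => norm_le_pi_norm x i) (norm_nonneg _)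
  · rw [pi_norm_le_iff_of_nonneg (Real.iSup_nonneg fun i => abs_nonneg _)]
    intro i
    exact le_ciSup (f := fun i => |x i|) (Set.finite_range _).bddAbove i

lemma cgv_gauss {Ω : Type*} [MeasurableSpace Ω] {k : ℕ} {P : Measure Ω}
    {X : Ω → Fin k → ℝ} (hXm : Measurable X) (hX : IsCenteredGaussianVec P X) :
    HasGaussianLaw X P where
  isGaussian_map := by
    apply isGaussian_of_map_eq_gaussianReal
    intro L
    refine ⟨0, (variance (fun ω => ∑ i, L (Pi.single i 1) * X ω i) P).toNNReal, ?_⟩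
    rw [← hX, Measure.map_map (by fun_prop) hXm]
    congr 1
    funext ω
    have h : X ω = ∑ i, X ω i • (Pi.single i 1 : Fin k → ℝ) := by
      rw [← pi_eq_sum_univ' (X ω)]
    simp only [Function.comp]
    conv_lhs => rw [h]
    simp [mul_comm]

lemma cgv_mean {Ω : Type*} [MeasurableSpace Ω] {k : ℕ} {P : Measure Ω}
    {X : Ω → Fin k → ℝ} (hXm : Measurable X) (hX : IsCenteredGaussianVec P X) (i : Fin k) :
    ∫ ω, X ω i ∂P = 0 := by
  have h := hX (Pi.single i 1)
  have e : (fun ω => ∑ j, (Pi.single i 1 : Fin k → ℝ) j * X ω j) = fun ω => X ω i := by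
    funext ω
    simp [Pi.single_apply]
  rw [e] at h
  have h2 := integral_id_gaussianReal (μ := 0) (v := (variance (fun ω => X ω i) P).toNNReal)
  rw [← h, integral_map (by fun_prop) (by fun_prop)] at h2
  simpa using h2

lemma gauss_fst {Ω Ω' E : Type*} [MeasurableSpace Ω] [MeasurableSpace Ω'] {P : Measure Ω}
    {P' : Measure Ω'} [IsProbabilityMeasure P'] [SFinite P]
    [NormedAddCommGroup E] [NormedSpace ℝ E] [MeasurableSpace E]
    [BorelSpace E] {X : Ω → E} (hXm : Measurable X) (h : HasGaussianLaw X P) :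
    HasGaussianLaw (fun ω : Ω × Ω' => X ω.1) (P.prod P') where
  isGaussian_map := by
    have := h.isGaussian_map
    have e : (P.prod P').map (fun ω : Ω × Ω' => X ω.1) = P.map X := by
      rw [← Function.comp_def X Prod.fst, ← Measure.map_map hXm measurable_fst,
        measurePreserving_fst.map_eq]
    rwa [e]

lemma gauss_snd {Ω Ω' E : Type*} [MeasurableSpace Ω] [MeasurableSpace Ω'] {P : Measure Ω}
    {P' : Measure Ω'} [IsProbabilityMeasure P'] [SFinite P]
    [NormedAddCommGroup E] [NormedSpace ℝ E] [MeasurableSpace E]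
    [BorelSpace E] {X : Ω → E} (hXm : Measurable X) (h : HasGaussianLaw X P) :
    HasGaussianLaw (fun ω : Ω' × Ω => X ω.2) (P'.prod P) where
  isGaussian_map := by
    have := h.isGaussian_map
    have e : (P'.prod P).map (fun ω : Ω' × Ω => X ω.2) = P.map X := by
      rw [← Function.comp_def X Prod.snd, ← Measure.map_map hXm measurable_snd,
        measurePreserving_snd.map_eq]
    rwa [e]

lemma gauss_std : ∫ x, x ^ 2 ∂(gaussianReal 0 1) = 1 := by
  have h := variance_id_gaussianReal (μ := 0) (v := 1)
  rw [variance_eq_integral (by fun_prop)] at h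
  simpa using h

section trip
variable {Ω : Type*} [MeasurableSpace Ω] (P : Measure Ω) [IsProbabilityMeasure P]

lemma trip_X (f : Ω → ℝ) :
    ∫ ω, f ω.1.1 ∂((P.prod P).prod (gaussianReal 0 1)) = ∫ ω, f ω ∂P := by
  rw [integral_fun_fst (f := fun p : Ω × Ω => f p.1), integral_fun_fst (f := f)]
  simp

lemma trip_Y (f : Ω → ℝ) :
    ∫ ω, f ω.1.2 ∂((P.prod P).prod (gaussianReal 0 1)) = ∫ ω, f ω ∂P := by
  rw [integral_fun_fst (f := fun p : Ω × Ω => f p.2), integral_fun_snd (f := f)]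
  simp

lemma trip_g (f : ℝ → ℝ) :
    ∫ ω, f ω.2 ∂((P.prod P).prod (gaussianReal 0 1)) = ∫ x, f x ∂(gaussianReal 0 1) := by
  rw [integral_fun_snd (f := f)]
  simp

lemma trip_XY (f g : Ω → ℝ) :
    ∫ ω, f ω.1.1 * g ω.1.2 ∂((P.prod P).prod (gaussianReal 0 1))
      = (∫ ω, f ω ∂P) * ∫ ω, g ω ∂P := by
  rw [integral_fun_fst (f := fun p : Ω × Ω => f p.1 * g p.2), integral_prod_mul f g]
  simp

lemma trip_Xg (f : Ω → ℝ) (g : ℝ → ℝ) :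
    ∫ ω, f ω.1.1 * g ω.2 ∂((P.prod P).prod (gaussianReal 0 1))
      = (∫ ω, f ω ∂P) * ∫ x, g x ∂(gaussianReal 0 1) := by
  rw [integral_prod_mul (fun p : Ω × Ω => f p.1) g, integral_fun_fst (f := f)]
  simp

lemma trip_Yg (f : Ω → ℝ) (g : ℝ → ℝ) :
    ∫ ω, f ω.1.2 * g ω.2 ∂((P.prod P).prod (gaussianReal 0 1))
      = (∫ ω, f ω ∂P) * ∫ x, g x ∂(gaussianReal 0 1) := by
  rw [integral_prod_mul (fun p : Ω × Ω => f p.2) g, integral_fun_snd (f := f)]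
  simp

lemma trip_memX {E : Type*} [NormedAddCommGroup E] {f : Ω → E} {p : ENNReal} (h : MemLp f p P) :
    MemLp (fun ω : (Ω × Ω) × ℝ => f ω.1.1) p ((P.prod P).prod (gaussianReal 0 1)) :=
  (h.comp_fst P).comp_fst _

lemma trip_memY {E : Type*} [NormedAddCommGroup E] {f : Ω → E} {p : ENNReal} (h : MemLp f p P) :
    MemLp (fun ω : (Ω × Ω) × ℝ => f ω.1.2) p ((P.prod P).prod (gaussianReal 0 1)) :=
  (h.comp_snd P).comp_fst _

lemma trip_memg {p : ENNReal} (hp : p ≠ ⊤) :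
    MemLp (fun ω : (Ω × Ω) × ℝ => ω.2) p ((P.prod P).prod (gaussianReal 0 1)) :=
  MemLp.comp_snd (f := id) (IsGaussian.hasGaussianLaw_id.memLp hp) _

lemma trip_sq {f : Ω → ℝ} (h : MemLp f 2 P) (t : ℝ) :
    ∫ ω, (f ω.1.2 + t * ω.2) ^ 2 ∂((P.prod P).prod (gaussianReal 0 1))
      = ∫ ω, f ω ^ 2 ∂P + t ^ 2 := by
  have hY := trip_memY P h
  have hg := trip_memg P (p := 2) (by simp)
  have h1 : Integrable (fun ω : (Ω × Ω) × ℝ => f ω.1.2 ^ 2)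
    ((P.prod P).prod (gaussianReal 0 1)) := hY.integrable_sq
  have h2 : Integrable (fun ω : (Ω × Ω) × ℝ => f ω.1.2 * ω.2)
    ((P.prod P).prod (gaussianReal 0 1)) := hY.integrable_mul hg
  have h3 : Integrable (fun ω : (Ω × Ω) × ℝ => ω.2 ^ 2)
    ((P.prod P).prod (gaussianReal 0 1)) := hg.integrable_sq
  have e : ∀ ω : (Ω × Ω) × ℝ, (f ω.1.2 + t * ω.2) ^ 2
      = 1 * f ω.1.2 ^ 2 + (2 * t) * (f ω.1.2 * ω.2) + t ^ 2 * ω.2 ^ 2 + 0 * ω.2 ^ 2 := by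
    intro ω; ring
  simp_rw [e]
  rw [int_four _ _ _ _ h1 h2 h3 h3, trip_Y P (fun ω => f ω ^ 2), trip_Yg P f (fun x => x),
    trip_g P (fun x => x ^ 2), gauss_std, integral_id_gaussianReal]
  ring

end trip

/-- The sign attached to a boolean. -/
def bsgn (e : Bool) : ℝ := if e then 1 else -1

lemma bsgn_sq (e : Bool) : bsgn e ^ 2 = 1 := by cases e <;> simp [bsgn]

lemma bsgn_mul_le (e : Bool) (x : ℝ) : bsgn e * x ≤ |x| := by
  cases e
  · simpa [bsgn] using neg_le_abs x
  · simpa [bsgn] using le_abs_self x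

lemma joint_gauss {Ω : Type*} [MeasurableSpace Ω] {k : ℕ} (P : Measure Ω) [IsProbabilityMeasure P]
    (X Y : Ω → Fin k → ℝ) (hXm : Measurable X) (hYm : Measurable Y)
    (hX : HasGaussianLaw X P) (hY : HasGaussianLaw Y P) (σ : ℝ) :
    HasGaussianLaw (fun ω : (Ω × Ω) × ℝ =>
      ((fun i : Fin k × Bool => bsgn i.2 * X ω.1.1 i.1),
        (fun i : Fin k × Bool => Y ω.1.2 i.1 + bsgn i.2 * σ * ω.2)))
      ((P.prod P).prod (gaussianReal 0 1)) := by
  have h1 : HasGaussianLaw (fun ω : Ω × Ω => (X ω.1, Y ω.2)) (P.prod P) :=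
    IndepFun.hasGaussianLaw (gauss_fst hXm hX) (gauss_snd hYm hY) (indepFun_prod hXm hYm)
  have hm1 : Measurable (fun ω : Ω × Ω => (X ω.1, Y ω.2)) := by fun_prop
  have h2 : HasGaussianLaw (fun ω : (Ω × Ω) × ℝ => ((X ω.1.1, Y ω.1.2), ω.2))
      ((P.prod P).prod (gaussianReal 0 1)) :=
    IndepFun.hasGaussianLaw (gauss_fst hm1 h1)
      (gauss_snd (X := fun x : ℝ => x) measurable_id IsGaussian.hasGaussianLaw_id)
      (indepFun_prod hm1 (Y := fun x : ℝ => x) measurable_id)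
  let E := Fin k → ℝ
  let LX : (E × E) × ℝ →L[ℝ] (Fin k × Bool → ℝ) := ContinuousLinearMap.pi fun i =>
    bsgn i.2 • ((ContinuousLinearMap.proj (R := ℝ) (φ := fun _ : Fin k => ℝ) i.1).comp
      ((ContinuousLinearMap.fst ℝ E E).comp (ContinuousLinearMap.fst ℝ (E × E) ℝ)))
  let LY : (E × E) × ℝ →L[ℝ] (Fin k × Bool → ℝ) := ContinuousLinearMap.pi fun i =>
    ((ContinuousLinearMap.proj (R := ℝ) (φ := fun _ : Fin k => ℝ) i.1).comp
      ((ContinuousLinearMap.snd ℝ E E).comp (ContinuousLinearMap.fst ℝ (E × E) ℝ)))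
      + (bsgn i.2 * σ) • ContinuousLinearMap.snd ℝ (E × E) ℝ
  exact h2.map_fun (LX.prod LY)

lemma rpow_add_le_two {a b m : ℝ} (ha : 0 ≤ a) (hb : 0 ≤ b) (hm : 1 ≤ m) :
    (a + b) ^ m ≤ 2 ^ (m - 1) * (a ^ m + b ^ m) := by
  lift a to ℝ≥0 using ha
  lift b to ℝ≥0 using hb
  exact_mod_cast NNReal.rpow_add_le_mul_rpow_add_rpow a b hm

set_option maxHeartbeats 1000000 in
theorem moment_comparison_increments
    {Ω : Type*} [MeasurableSpace Ω] {k : ℕ} (P : Measure Ω) [IsProbabilityMeasure P]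
    (X Y : Ω → Fin k → ℝ) (hXmeas : Measurable X) (hYmeas : Measurable Y)
    (hX : IsCenteredGaussianVec P X) (hY : IsCenteredGaussianVec P Y)
    (hincr : ∀ i j, ∫ ω, (X ω i - X ω j) ^ 2 ∂P ≤ ∫ ω, (Y ω i - Y ω j) ^ 2 ∂P)
    (σ : ℝ) (hσ : σ = ⨆ i, Real.sqrt ((∫ ω, (X ω i) ^ 2 ∂P) + ∫ ω, (Y ω i) ^ 2 ∂P))
    (m : ℝ) (hm : 1 ≤ m) :
    ∫ ω, (⨆ i, |X ω i|) ^ m ∂P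
      ≤ 2 ^ (m - 1) * (σ ^ m * (∫ x, |x| ^ m ∂(gaussianReal 0 1))
          + ∫ ω, (⨆ i, |Y ω i|) ^ m ∂P) := by
  simp_rw [iSup_abs_eq_norm]
  have hGX := cgv_gauss hXmeas hX
  have hGY := cgv_gauss hYmeas hY
  have hX0 := cgv_mean hXmeas hX
  have hY0 := cgv_mean hYmeas hY
  have hXi : ∀ i, MemLp (fun ω => X ω i) 2 P := fun i =>
    (hGX.map_fun (ContinuousLinearMap.proj (R := ℝ) (φ := fun _ : Fin k => ℝ) i)).memLp_two
  have hYi : ∀ i, MemLp (fun ω => Y ω i) 2 P := fun i =>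
    (hGY.map_fun (ContinuousLinearMap.proj (R := ℝ) (φ := fun _ : Fin k => ℝ) i)).memLp_two
  have hσ0 : 0 ≤ σ := by rw [hσ]; exact Real.iSup_nonneg fun i => Real.sqrt_nonneg _
  have hXsq : ∀ i, 0 ≤ ∫ ω, X ω i ^ 2 ∂P := fun i => integral_nonneg fun ω => sq_nonneg _
  have hYsq : ∀ i, 0 ≤ ∫ ω, Y ω i ^ 2 ∂P := fun i => integral_nonneg fun ω => sq_nonneg _
  have hσi : ∀ i, ∫ ω, X ω i ^ 2 ∂P ≤ σ ^ 2 := by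
    intro i
    have h1 : Real.sqrt ((∫ ω, (X ω i) ^ 2 ∂P) + ∫ ω, (Y ω i) ^ 2 ∂P) ≤ σ := by
      rw [hσ]
      exact le_ciSup (f := fun i => Real.sqrt ((∫ ω, (X ω i) ^ 2 ∂P) + ∫ ω, (Y ω i) ^ 2 ∂P))
        (Set.finite_range _).bddAbove i
    rw [Real.sqrt_le_left hσ0] at h1
    linarith [hYsq i]
  set Q := (P.prod P).prod (gaussianReal 0 1) with hQ
  have hBY : MemLp (fun ω : (Ω × Ω) × ℝ => ‖Y ω.1.2‖) (ENNReal.ofReal m) Q :=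
    (trip_memY P (hGY.memLp ENNReal.ofReal_ne_top)).norm
  have hBg : MemLp (fun ω : (Ω × Ω) × ℝ => σ * |ω.2|) (ENNReal.ofReal m) Q :=
    ((trip_memg P ENNReal.ofReal_ne_top).abs).const_mul σ
  have hgen : ∀ f : (Ω × Ω) × ℝ → ℝ, (∀ ω, 0 ≤ f ω) → MemLp f (ENNReal.ofReal m) Q →
      Integrable (fun ω => f ω ^ m) Q := by
    intro f hf h
    have := h.integrable_norm_rpow (by simp; linarith) (by simp)
    refine this.congr (Filter.Eventually.of_forall fun ω => ?_)
    simp only [Real.norm_eq_abs, abs_of_nonneg (hf ω)]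
    rw [ENNReal.toReal_ofReal (by linarith)]
  have key : ∫ ω, ‖X ω.1.1‖ ^ m ∂Q ≤ ∫ ω, (‖Y ω.1.2‖ + σ * |ω.2|) ^ m ∂Q := by
    refine cmp_limit (fun (ω : (Ω × Ω) × ℝ) (i : Fin k × Bool) => bsgn i.2 * X ω.1.1 i.1)
      (fun (ω : (Ω × Ω) × ℝ) (i : Fin k × Bool) => Y ω.1.2 i.1 + bsgn i.2 * σ * ω.2)
      (joint_gauss P X Y hXmeas hYmeas hGX hGY σ) ?_ ?_ ?_ ?_ ?_ hm
      (fun ω => ‖X ω.1.1‖) (fun ω => ‖Y ω.1.2‖ + σ * |ω.2|) (fun ω => norm_nonneg _)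
      (fun ω => by positivity) ?_ ?_ (hBY.add hBg)
    · intro i
      rw [integral_const_mul, trip_X P (fun ω => X ω i.1), hX0, mul_zero]
    · intro i
      have h1 : Integrable (fun ω : (Ω × Ω) × ℝ => Y ω.1.2 i.1) Q :=
        (trip_memY P (hYi i.1)).integrable (by norm_num)
      have h2 : Integrable (fun ω : (Ω × Ω) × ℝ => ω.2) Q :=
        (trip_memg P (p := 2) (by simp)).integrable (by norm_num)
      rw [integral_add h1 (h2.const_mul _), integral_const_mul, trip_Y P (fun ω => Y ω i.1),
        trip_g P (fun x => x), hY0, integral_id_gaussianReal]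
      simp
    · intro i j
      have h1 : Integrable (fun ω : (Ω × Ω) × ℝ => X ω.1.1 i.1 * Y ω.1.2 j.1) Q :=
        (trip_memX P (hXi i.1)).integrable_mul (trip_memY P (hYi j.1))
      have h2 : Integrable (fun ω : (Ω × Ω) × ℝ => X ω.1.1 i.1 * ω.2) Q :=
        (trip_memX P (hXi i.1)).integrable_mul (trip_memg P (p := 2) (by simp))
      have e : ∀ ω : (Ω × Ω) × ℝ,
          bsgn i.2 * X ω.1.1 i.1 * (Y ω.1.2 j.1 + bsgn j.2 * σ * ω.2)
          = bsgn i.2 * (X ω.1.1 i.1 * Y ω.1.2 j.1)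
            + (bsgn i.2 * bsgn j.2 * σ) * (X ω.1.1 i.1 * ω.2) := fun ω => by ring
      simp_rw [e]
      rw [integral_add (h1.const_mul _) (h2.const_mul _), integral_const_mul, integral_const_mul,
        trip_XY P (fun ω => X ω i.1) (fun ω => Y ω j.1),
        trip_Xg P (fun ω => X ω i.1) (fun x => x), hX0]
      simp
    · intro i
      rw [trip_sq P (hYi i.1)]
      simp_rw [mul_pow, bsgn_sq, one_mul]
      rw [trip_X P (fun ω => X ω i.1 ^ 2)]
      linarith [hσi i.1, hYsq i.1]
    · intro i j
      have e : ∀ ω : (Ω × Ω) × ℝ,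
          (Y ω.1.2 i.1 + bsgn i.2 * σ * ω.2 - (Y ω.1.2 j.1 + bsgn j.2 * σ * ω.2))
          = (fun ω => Y ω i.1 - Y ω j.1) ω.1.2 + ((bsgn i.2 - bsgn j.2) * σ) * ω.2 :=
        fun ω => by ring
      simp_rw [e]
      rw [trip_sq P (f := fun ω => Y ω i.1 - Y ω j.1) ((hYi i.1).sub (hYi j.1)),
        trip_X P (fun ω => (bsgn i.2 * X ω i.1 - bsgn j.2 * X ω j.1) ^ 2)]
      by_cases hs : i.2 = j.2
      · simp_rw [hs, ← mul_sub, mul_pow, bsgn_sq, one_mul]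
        simpa using hincr i.1 j.1
      · have hY2 : 0 ≤ ∫ ω, (Y ω i.1 - Y ω j.1) ^ 2 ∂P := integral_nonneg fun ω => sq_nonneg _
        have hd : ((bsgn i.2 - bsgn j.2) * σ) ^ 2 = 4 * σ ^ 2 := by
          rw [mul_pow]
          congr 1
          revert hs
          cases i.2 <;> cases j.2 <;> simp [bsgn] <;> norm_num
        have i1 := (hXi i.1).integrable_sq
        have i2 := (hXi j.1).integrable_sq
        have h3 : ∫ ω, (bsgn i.2 * X ω i.1 - bsgn j.2 * X ω j.1) ^ 2 ∂P
            ≤ ∫ ω, (2 * X ω i.1 ^ 2 + 2 * X ω j.1 ^ 2) ∂P := by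
          refine integral_mono_of_nonneg (Filter.Eventually.of_forall fun ω => sq_nonneg _)
            ((i1.const_mul 2).add (i2.const_mul 2)) (Filter.Eventually.of_forall fun ω => ?_)
          have ha : bsgn i.2 ^ 2 = 1 := bsgn_sq _
          have hb : bsgn j.2 ^ 2 = 1 := bsgn_sq _
          have := sq_nonneg (bsgn i.2 * X ω i.1 + bsgn j.2 * X ω j.1)
          have hc : (bsgn i.2 * X ω i.1 - bsgn j.2 * X ω j.1) ^ 2
            + (bsgn i.2 * X ω i.1 + bsgn j.2 * X ω j.1) ^ 2
            = 2 * (bsgn i.2 ^ 2 * X ω i.1 ^ 2) + 2 * (bsgn j.2 ^ 2 * X ω j.1 ^ 2) := by ring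
          rw [ha, hb] at hc
          show (bsgn i.2 * X ω i.1 - bsgn j.2 * X ω j.1) ^ 2
            ≤ 2 * X ω i.1 ^ 2 + 2 * X ω j.1 ^ 2
          linarith
        rw [integral_add (i1.const_mul 2) (i2.const_mul 2), integral_const_mul,
          integral_const_mul] at h3
        rw [hd]
        show _ ≤ ∫ ω, (Y ω i.1 - Y ω j.1) ^ 2 ∂P + 4 * σ ^ 2
        linarith [hσi i.1, hσi j.1]
    · intro ω b hb h
      rw [pi_norm_le_iff_of_nonneg hb]
      intro i
      rw [Real.norm_eq_abs, abs_le']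
      have h1 := h (i, true)
      have h2 := h (i, false)
      simp only [bsgn] at h1 h2
      simp at h1 h2
      exact ⟨h1, by linarith⟩
    · intro ω i
      have h1 : Y ω.1.2 i.1 ≤ ‖Y ω.1.2‖ := (le_abs_self _).trans (norm_le_pi_norm (Y ω.1.2) i.1)
      have h2 : bsgn i.2 * σ * ω.2 ≤ σ * |ω.2| := by
        rw [mul_assoc]
        refine (bsgn_mul_le _ _).trans ?_
        rw [abs_mul, abs_of_nonneg hσ0]
      show Y ω.1.2 i.1 + bsgn i.2 * σ * ω.2 ≤ ‖Y ω.1.2‖ + σ * |ω.2|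
      linarith
  rw [trip_X P (fun ω => ‖X ω‖ ^ m)] at key
  refine key.trans ?_
  have iY := hgen _ (fun ω => norm_nonneg _) hBY
  have ig := hgen _ (fun ω => by positivity) hBg
  calc ∫ ω, (‖Y ω.1.2‖ + σ * |ω.2|) ^ m ∂Q
      ≤ ∫ ω, 2 ^ (m - 1) * (‖Y ω.1.2‖ ^ m + (σ * |ω.2|) ^ m) ∂Q := by
        refine integral_mono_of_nonneg (Filter.Eventually.of_forall fun ω => ?_)
          ((iY.add ig).const_mul _) (Filter.Eventually.of_forall fun ω => ?_)
        · simp only [Pi.zero_apply]; positivity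
        · exact rpow_add_le_two (norm_nonneg _) (by positivity) hm
    _ = _ := by
        rw [integral_const_mul, integral_add iY ig, trip_Y P (fun ω => ‖Y ω‖ ^ m)]
        simp_rw [fun ω : (Ω × Ω) × ℝ => Real.mul_rpow hσ0 (abs_nonneg ω.2) (z := m)]
        rw [integral_const_mul, trip_g P (fun x => |x| ^ m), add_comm]
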